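/- Let s ∈ (−d/2, d/2). There exists a constant C > 0, depending only on s, d and the Littlewood–Paley functions, such that for all Schwartz functions u and v on ℝ^d, ‖uv‖_{Ḣ^s} ≤ C ‖u‖_{Ḃ^{d/2}_{2,1}} ‖v‖_{Ḣ^s}. -/

import Mathlib

open MeasureTheory SchwartzMap Real Complex
open scoped FourierTransform ENNReal NNReal

noncomputable section

/-- Euclidean space `ℝ^d`. -/
abbrev Ed (d : ℕ) := EuclideanSpace ℝ (Fin d)

/-- A Littlewood–Paley pair `(χ, φ)` on `ℝ^d`: smooth functions with
`supp χ ⊆ {|ξ| ≤ 4/3}`, `supp φ ⊆ {3/4 ≤ |ξ| ≤ 8/3}`,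
`χ(ξ) + ∑_{q ≥ 0} φ(2^{-q}ξ) = 1` for all `ξ`, and `∑_{q ∈ ℤ} φ(2^{-q}ξ) = 1` for `ξ ≠ 0`. -/
structure LPPair (d : ℕ) where
  χ : Ed d → ℝ
  φ : Ed d → ℝ
  smooth_χ : ContDiff ℝ (⊤ : ℕ∞) χ
  smooth_φ : ContDiff ℝ (⊤ : ℕ∞) φ
  supp_χ : Function.support χ ⊆ {ξ : Ed d | ‖ξ‖ ≤ 4/3}
  supp_φ : Function.support φ ⊆ {ξ : Ed d | 3/4 ≤ ‖ξ‖ ∧ ‖ξ‖ ≤ 8/3}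
  sum_one : ∀ ξ : Ed d, χ ξ + ∑' q : ℕ, φ ((2:ℝ) ^ (-(q:ℤ)) • ξ) = 1
  sum_one' : ∀ ξ : Ed d, ξ ≠ 0 → ∑' q : ℤ, φ ((2:ℝ) ^ (-q) • ξ) = 1

variable {d : ℕ}

/-- Homogeneous Littlewood–Paley block `Δ̇_q u = 𝓕⁻¹(φ(2^{-q}·) 𝓕u)`. -/
def lpBlock (P : LPPair d) (q : ℤ) (u : Ed d → ℂ) : Ed d → ℂ :=
  𝓕⁻ (fun ξ => (P.φ ((2:ℝ) ^ (-q) • ξ) : ℂ) * 𝓕 u ξ)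

/-- Low-frequency cut-off `Ṡ_q u = 𝓕⁻¹(χ(2^{-q}·) 𝓕u)`. -/
def sBlock (P : LPPair d) (q : ℤ) (u : Ed d → ℂ) : Ed d → ℂ :=
  𝓕⁻ (fun ξ => (P.χ ((2:ℝ) ^ (-q) • ξ) : ℂ) * 𝓕 u ξ)

/-- `ℓ^r(ℤ)`-norm of a family of extended nonnegative reals. -/
def ellNorm (r : ℝ≥0∞) (a : ℤ → ℝ≥0∞) : ℝ≥0∞ :=
  if r = ∞ then ⨆ q, a q else (∑' q, a q ^ r.toReal) ^ (1 / r.toReal)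

/-- Homogeneous Besov norm `‖u‖_{Ḃ^s_{p,r}}`. -/
def besovNorm (P : LPPair d) (s : ℝ) (p r : ℝ≥0∞) (u : Ed d → ℂ) : ℝ≥0∞ :=
  ellNorm r (fun q => (2:ℝ≥0∞) ^ ((q : ℝ) * s) * eLpNorm (lpBlock P q u) p volume)

/-- Homogeneous Sobolev norm `‖u‖_{Ḣ^s} = ‖ |ξ|^s 𝓕u(ξ) ‖_{L²_ξ}`. -/
def sobNorm (s : ℝ) (u : Ed d → ℂ) : ℝ≥0∞ :=
  eLpNorm (fun ξ : Ed d => ‖ξ‖ ^ s * ‖𝓕 u ξ‖) 2 volume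

/-- Hybrid Besov norm `‖u‖_{𝓑̇^s}`. -/
def hybridNorm (P : LPPair d) (s : ℝ) (u : Ed d → ℂ) : ℝ≥0∞ :=
  (∑' q : ℤ, if q < 0 then
      ((2:ℝ≥0∞) ^ ((q : ℝ) * s) * eLpNorm (lpBlock P q u) 2 volume) ^ (2:ℝ) else 0) ^ (1/2 : ℝ)
  + ∑' q : ℤ, if 0 ≤ q then
      (2:ℝ≥0∞) ^ ((q : ℝ) * (d : ℝ) / 2) * eLpNorm (lpBlock P q u) 2 volume else 0

/-- High-frequency norm `‖u‖^h_{Ḃ^σ_{2,1}}`. -/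
def highNorm (P : LPPair d) (σ : ℝ) (u : Ed d → ℂ) : ℝ≥0∞ :=
  ∑' q : ℤ, if 0 ≤ q then (2:ℝ≥0∞) ^ ((q : ℝ) * σ) * eLpNorm (lpBlock P q u) 2 volume else 0

/-!
On the Fourier side the product is a convolution, and `𝓕 u` is the sum over `q` of the functions
`f = 𝓕 (Δ̇_q u)`, each supported in a ball of radius `R ∼ 2 ^ q`. It therefore suffices to show, for
`f` supported in `{‖ξ‖ ≤ R}`, that convolution with `f` is bounded on `L²(‖ξ‖ ^ (2 * s) dξ)` with
norm at most `C * R ^ (d / 2) * ‖f‖₂`, and to sum over `q`.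

In `∫ f (ξ - η) * h η dη` the points `ξ` and `η` are at distance at most `R`. Where the larger of
the two weights `‖ξ‖ ^ |s|`, `‖η‖ ^ |s|` is at most `2 ^ |s|` times the smaller, it can be traded
for the other one, and Young's inequality together with Bernstein's bound
`‖f‖₁ ≤ C * R ^ (d / 2) * ‖f‖₂` applies. Otherwise both points lie in the ball of radius `2 * R`
and the one carrying the smaller weight lies in the ball of radius `R`, on which the weight
`‖·‖ ^ (-|s|)` has `L²` norm of order `R ^ (d / 2 - |s|)` because `|s| < d / 2`; the
Cauchy–Schwarz inequality then gives the same bound.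
-/

section Lebesgue

variable {α : Type*} [MeasurableSpace α] {μ : Measure α}

lemma eLpNorm_mono_ennreal_ae {p : ℝ≥0∞} {f g : α → ℝ≥0∞} (h : f ≤ᵐ[μ] g) :
    eLpNorm f p μ ≤ eLpNorm g p μ :=
  eLpNorm_mono_enorm_ae h

lemma eLpNorm_const_mul_le_ennreal {p : ℝ≥0∞} (hp : p ≠ 0) (c : ℝ≥0∞) {f : α → ℝ≥0∞}
    (hf : AEMeasurable f μ) : eLpNorm (fun x => c * f x) p μ ≤ c * eLpNorm f p μ := by
  cases c with
  | coe c => exact eLpNorm_le_nnreal_smul_eLpNorm_of_ae_le_mul' (.of_forall fun _ => le_rfl) p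
  | top =>
    by_cases h0 : eLpNorm f p μ = 0
    · have hf0 : f =ᵐ[μ] 0 := (eLpNorm_eq_zero_iff hf.aestronglyMeasurable hp).1 h0
      have hcf : (fun x => ∞ * f x) =ᵐ[μ] 0 := hf0.mono fun x hx => by simp [hx]
      simp [eLpNorm_congr_ae hcf]
    · simp [ENNReal.top_mul h0]

lemma eLpNorm_tsum_le_ennreal {ι : Type*} [Countable ι] {p : ℝ≥0∞} (hp : 1 ≤ p) (hp_top : p ≠ ∞)
    {f : ι → α → ℝ≥0∞} (hf : ∀ i, Measurable (f i)) :
    eLpNorm (fun x => ∑' i, f i x) p μ ≤ ∑' i, eLpNorm (f i) p μ := by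
  have hp0 : p ≠ 0 := (zero_lt_one.trans_le hp).ne'
  have hr : 0 < p.toReal := ENNReal.toReal_pos hp0 hp_top
  have hdir : Directed (· ≤ ·) fun (s : Finset ι) x => (∑ i ∈ s, f i x) ^ p.toReal :=
    Monotone.directed_le fun s t hst x => by dsimp only; gcongr
  have hsup : ∫⁻ x, (∑' i, f i x) ^ p.toReal ∂μ
      = ⨆ s : Finset ι, ∫⁻ x, (∑ i ∈ s, f i x) ^ p.toReal ∂μ := by
    rw [← lintegral_iSup_directed (fun s => by fun_prop) hdir]
    exact lintegral_congr fun x => by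
      rw [ENNReal.tsum_eq_iSup_sum]
      exact (ENNReal.orderIsoRpow _ hr).map_iSup _
  rw [eLpNorm_eq_lintegral_rpow_enorm_toReal hp0 hp_top, one_div,
    ENNReal.rpow_inv_le_iff hr]
  simp only [enorm_eq_self]
  refine hsup.trans_le (iSup_le fun s => ?_)
  have hsum : eLpNorm (∑ i ∈ s, f i) p μ ≤ ∑' i, eLpNorm (f i) p μ :=
    (eLpNorm_sum_le (fun i _ => (hf i).aestronglyMeasurable) hp).trans (ENNReal.sum_le_tsum s)
  rw [eLpNorm_eq_lintegral_rpow_enorm_toReal hp0 hp_top, one_div,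
    ENNReal.rpow_inv_le_iff hr] at hsum
  simpa only [enorm_eq_self, Finset.sum_apply] using hsum

lemma lintegral_mul_le_eLpNorm_two_mul_eLpNorm_two
    {f g : α → ℝ≥0∞} (hf : AEMeasurable f μ) (hg : AEMeasurable g μ) :
    ∫⁻ x, f x * g x ∂μ ≤ eLpNorm f 2 μ * eLpNorm g 2 μ := by
  have h := ENNReal.lintegral_mul_le_Lp_mul_Lq μ Real.HolderConjugate.two_two hf hg
  rw [eLpNorm_eq_lintegral_rpow_enorm_toReal two_ne_zero ENNReal.ofNat_ne_top,
    eLpNorm_eq_lintegral_rpow_enorm_toReal two_ne_zero ENNReal.ofNat_ne_top]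
  simpa only [enorm_eq_self, ENNReal.toReal_ofNat, Pi.mul_apply] using h

end Lebesgue

section Convolution

lemma lconvolution_mono_left_ae {G : Type*} [AddGroup G] [MeasurableSpace G] {μ : Measure G}
    {f f' : G → ℝ≥0∞} (h : f ≤ᵐ[μ] f') (g : G → ℝ≥0∞) : f ⋆ₗ[μ] g ≤ f' ⋆ₗ[μ] g := fun x =>
  lintegral_mono_ae (h.mono fun y hy => mul_le_mul_left hy (g (-y + x)))

variable {G : Type*} [AddGroup G] [MeasurableSpace G] [MeasurableAdd₂ G] [MeasurableNeg G]
  {μ : Measure G} {f g : G → ℝ≥0∞}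

lemma tsum_lconvolution {ι : Type*} [Countable ι] {f : ι → G → ℝ≥0∞} (hf : ∀ i, Measurable (f i))
    (hg : Measurable g) (x : G) :
    ((fun y => ∑' i, f i y) ⋆ₗ[μ] g) x = ∑' i, (f i ⋆ₗ[μ] g) x := by
  simp only [lconvolution_def, ← ENNReal.tsum_mul_right]
  exact lintegral_tsum fun i => by fun_prop

lemma lintegral_lconvolution [SFinite μ] [μ.IsAddLeftInvariant]
    (hf : Measurable f) (hg : Measurable g) :
    ∫⁻ x, (f ⋆ₗ[μ] g) x ∂μ = (∫⁻ x, f x ∂μ) * ∫⁻ x, g x ∂μ := by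
  simp only [lconvolution_def]
  rw [lintegral_lintegral_swap (by fun_prop), ← lintegral_mul_const _ hf]
  refine lintegral_congr fun y => ?_
  rw [lintegral_const_mul _ (by fun_prop), lintegral_add_left_eq_self]

-- Hölder for the splitting `f g = f ^ (1 - 1 / p) * (f * g ^ p) ^ (1 / p)`.
lemma lconvolution_rpow_le {p : ℝ} (hp : 1 ≤ p) (hf : Measurable f) (hg : Measurable g) (x : G) :
    (f ⋆ₗ[μ] g) x ^ p ≤ (∫⁻ y, f y ∂μ) ^ (p - 1) * (f ⋆ₗ[μ] fun y => g y ^ p) x := by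
  have hp0 : 0 < p := by linarith
  have hp1 : 1 / p ≤ 1 := (div_le_one hp0).2 hp
  have hsplit (a b : ℝ≥0∞) : a * b = a ^ (1 - 1 / p) * (a * b ^ p) ^ (1 / p) := by
    rw [ENNReal.mul_rpow_of_nonneg _ _ (by positivity), ← mul_assoc,
      ← ENNReal.rpow_add_of_nonneg _ _ (by linarith) (by positivity), ← ENNReal.rpow_mul]
    simp [hp0.ne']
  have hle : (f ⋆ₗ[μ] g) x ≤
      (∫⁻ y, f y ∂μ) ^ (1 - 1 / p) * ((f ⋆ₗ[μ] fun y => g y ^ p) x) ^ (1 / p) := by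
    rw [lconvolution_def, lintegral_congr fun y => hsplit (f y) (g (-y + x))]
    exact ENNReal.lintegral_mul_norm_pow_le (by fun_prop) (by fun_prop) (by linarith)
      (by positivity) (by ring)
  calc (f ⋆ₗ[μ] g) x ^ p
      ≤ ((∫⁻ y, f y ∂μ) ^ (1 - 1 / p) * ((f ⋆ₗ[μ] fun y => g y ^ p) x) ^ (1 / p)) ^ p := by
        gcongr
    _ = (∫⁻ y, f y ∂μ) ^ (p - 1) * (f ⋆ₗ[μ] fun y => g y ^ p) x := by
        rw [ENNReal.mul_rpow_of_nonneg _ _ hp0.le, ← ENNReal.rpow_mul, ← ENNReal.rpow_mul,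
          one_div_mul_cancel hp0.ne', ENNReal.rpow_one, sub_mul, one_div_mul_cancel hp0.ne',
          one_mul]

lemma eLpNorm_lconvolution_le [SFinite μ] [μ.IsAddLeftInvariant] {p : ℝ≥0∞} (hp : 1 ≤ p)
    (hp_top : p ≠ ∞) (hf : Measurable f) (hg : Measurable g) :
    eLpNorm (f ⋆ₗ[μ] g) p μ ≤ (∫⁻ x, f x ∂μ) * eLpNorm g p μ := by
  have hr : 1 ≤ p.toReal := by simpa using ENNReal.toReal_mono hp_top hp
  have hp0 : p ≠ 0 := (zero_lt_one.trans_le hp).ne'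
  have h : ∫⁻ x, (f ⋆ₗ[μ] g) x ^ p.toReal ∂μ
      ≤ (∫⁻ x, f x ∂μ) ^ p.toReal * ∫⁻ x, g x ^ p.toReal ∂μ := by
    calc ∫⁻ x, (f ⋆ₗ[μ] g) x ^ p.toReal ∂μ
        ≤ ∫⁻ x, (∫⁻ y, f y ∂μ) ^ (p.toReal - 1) * (f ⋆ₗ[μ] fun y => g y ^ p.toReal) x ∂μ :=
          lintegral_mono (lconvolution_rpow_le hr hf hg)
      _ = (∫⁻ y, f y ∂μ) ^ (p.toReal - 1) *
            ((∫⁻ x, f x ∂μ) * ∫⁻ x, g x ^ p.toReal ∂μ) := by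
          rw [lintegral_const_mul _ (by fun_prop), lintegral_lconvolution hf (by fun_prop)]
      _ = _ := by
          rw [← mul_assoc]
          congr 1
          nth_rw 2 [← ENNReal.rpow_one (∫⁻ x, f x ∂μ)]
          rw [← ENNReal.rpow_add_of_nonneg _ _ (by linarith) zero_le_one, sub_add_cancel]
  simp only [eLpNorm_eq_lintegral_rpow_enorm_toReal hp0 hp_top, enorm_eq_self, one_div]
  rw [ENNReal.rpow_inv_le_iff (by linarith), ENNReal.mul_rpow_of_nonneg _ _ (by linarith),
    ENNReal.rpow_inv_rpow (by linarith)]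
  exact h

lemma lconvolution_le_eLpNorm_two_mul_eLpNorm_two [μ.IsAddLeftInvariant] [μ.IsNegInvariant]
    (hf : Measurable f) (hg : Measurable g) (x : G) :
    (f ⋆ₗ[μ] g) x ≤ eLpNorm f 2 μ * eLpNorm g 2 μ := by
  have hg' : eLpNorm (fun y => g (-y + x)) 2 μ = eLpNorm g 2 μ := by
    have hmp := (Measure.measurePreserving_neg μ).comp (measurePreserving_add_left μ (-x))
    simpa [Function.comp_def] using
      eLpNorm_comp_measurePreserving (p := 2) hg.aestronglyMeasurable hmp
  rw [← hg']
  exact lintegral_mul_le_eLpNorm_two_mul_eLpNorm_two (by fun_prop) (by fun_prop)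

end Convolution

section PowerWeight

open Metric Module

variable {E : Type*} [NormedAddCommGroup E]

-- At `x = 0` and `s < 0` the left-hand side is `0` and the right-hand side is `∞`.
lemma enorm_norm_rpow {x : E} (hx : x ≠ 0) (s : ℝ) : ‖‖x‖ ^ s‖ₑ = ‖x‖ₑ ^ s := by
  rw [Real.enorm_of_nonneg (by positivity), ← ENNReal.ofReal_rpow_of_pos (norm_pos_iff.2 hx),
    ofReal_norm]

lemma enorm_rpow_neg_mul_enorm_rpow {x : E} (hx : x ≠ 0) (s : ℝ) :
    ‖x‖ₑ ^ (-s) * ‖x‖ₑ ^ s = 1 := by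
  rw [← ENNReal.rpow_add _ _ (enorm_ne_zero.2 hx) enorm_ne_top, neg_add_cancel, ENNReal.rpow_zero]

variable [NormedSpace ℝ E] [FiniteDimensional ℝ E] [MeasurableSpace E] [BorelSpace E]
  (μ : Measure E) [μ.IsAddHaarMeasure]

lemma lintegral_comp_smul {r : ℝ} (hr : r ≠ 0) (f : E → ℝ≥0∞) :
    ∫⁻ x, f (r • x) ∂μ = ENNReal.ofReal |(r ^ finrank ℝ E)⁻¹| * ∫⁻ x, f x ∂μ := by
  have hemb : MeasurableEmbedding fun x : E => r • x :=
    (Homeomorph.smulOfNeZero r hr).measurableEmbedding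
  rw [← hemb.lintegral_map, Measure.map_addHaar_smul μ hr, lintegral_smul_measure, smul_eq_mul]

lemma setLIntegral_closedBall_enorm_rpow (s : ℝ) {R : ℝ≥0} (hR : R ≠ 0) :
    ∫⁻ x in closedBall (0 : E) R, ‖x‖ₑ ^ s ∂μ
      = (R : ℝ≥0∞) ^ (s + finrank ℝ E) * ∫⁻ x in closedBall (0 : E) 1, ‖x‖ₑ ^ s ∂μ := by
  have hR0 : (R : ℝ≥0∞) ≠ 0 := by simpa using hR
  have hdil : ∀ x : E, (closedBall (0 : E) R).indicator (fun y => ‖y‖ₑ ^ s) ((R : ℝ) • x)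
      = (R : ℝ≥0∞) ^ s * (closedBall (0 : E) 1).indicator (fun y => ‖y‖ₑ ^ s) x := by
    intro x
    have hmem : (R : ℝ) • x ∈ closedBall (0 : E) R ↔ x ∈ closedBall (0 : E) 1 := by
      simp [norm_smul, pos_iff_ne_zero.2 hR]
    by_cases hx : x ∈ closedBall (0 : E) 1
    · rw [Set.indicator_of_mem hx, Set.indicator_of_mem (hmem.2 hx), enorm_smul,
        ENNReal.mul_rpow_of_ne_top enorm_ne_top enorm_ne_top]
      simp
    · simp [Set.indicator_of_notMem hx, Set.indicator_of_notMem (mt hmem.1 hx)]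
  have hscale := lintegral_comp_smul μ (NNReal.coe_ne_zero.2 hR)
    ((closedBall (0 : E) R).indicator fun y => ‖y‖ₑ ^ s)
  simp only [hdil] at hscale
  rw [lintegral_const_mul' _ _ (ENNReal.rpow_ne_top_of_ne_zero hR0 ENNReal.coe_ne_top),
    lintegral_indicator measurableSet_closedBall, lintegral_indicator measurableSet_closedBall]
    at hscale
  have hpow : (R : ℝ≥0∞) ^ finrank ℝ E * ENNReal.ofReal |((R : ℝ) ^ finrank ℝ E)⁻¹| = 1 := by
    rw [abs_of_nonneg (by positivity), ENNReal.ofReal_inv_of_pos (by positivity),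
      ENNReal.ofReal_pow R.coe_nonneg, ENNReal.ofReal_coe_nnreal]
    exact ENNReal.mul_inv_cancel (pow_ne_zero _ hR0) (ENNReal.pow_ne_top ENNReal.coe_ne_top)
  rw [ENNReal.rpow_add _ _ hR0 ENNReal.coe_ne_top, ENNReal.rpow_natCast,
    mul_comm (_ ^ s), mul_assoc, hscale, ← mul_assoc, hpow, one_mul]

lemma setLIntegral_closedBall_enorm_rpow_lt_top [Nontrivial E] {s : ℝ}
    (hs : -(finrank ℝ E : ℝ) < s) : ∫⁻ x in closedBall (0 : E) 1, ‖x‖ₑ ^ s ∂μ < ∞ := by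
  have hint : IntegrableOn (fun x : E => ‖x‖ ^ s) (ball 0 2) μ :=
    integrableOn_ball_of_norm_le_rpow (C := 1) (α := -s) finrank_pos (by linarith)
      (.of_forall fun x => by rw [Real.norm_of_nonneg (by positivity), neg_neg, one_mul])
      (by fun_prop : Measurable fun x : E => ‖x‖ ^ s).aestronglyMeasurable
  have hae : ∀ᵐ x ∂μ.restrict (closedBall (0 : E) 1), ‖x‖ₑ ^ s = ‖‖x‖ ^ s‖ₑ :=
    ae_restrict_of_ae <| (Measure.ae_ne μ 0).mono fun x hx => (enorm_norm_rpow hx s).symm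
  rw [lintegral_congr_ae hae]
  exact (hint.mono_set (closedBall_subset_ball one_lt_two)).2

lemma exists_eLpNorm_enorm_rpow_closedBall_le [Nontrivial E] {p : ℝ≥0∞} (hp : p ≠ 0)
    (hp_top : p ≠ ∞) {s : ℝ} (hs : -(finrank ℝ E / p.toReal : ℝ) < s) :
    ∃ C : ℝ≥0, ∀ R : ℝ≥0, R ≠ 0 →
      eLpNorm (fun x => ‖x‖ₑ ^ s) p (μ.restrict (closedBall (0 : E) R))
        ≤ C * (R : ℝ≥0∞) ^ (s + finrank ℝ E / p.toReal) := by
  have hr : 0 < p.toReal := ENNReal.toReal_pos hp hp_top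
  have hfin : ∫⁻ x in closedBall (0 : E) 1, ‖x‖ₑ ^ (s * p.toReal) ∂μ < ∞ :=
    setLIntegral_closedBall_enorm_rpow_lt_top μ (by rwa [neg_div', div_lt_iff₀ hr] at hs)
  lift ∫⁻ x in closedBall (0 : E) 1, ‖x‖ₑ ^ (s * p.toReal) ∂μ to ℝ≥0 using hfin.ne with I hI
  refine ⟨I ^ (1 / p.toReal), fun R hR => le_of_eq ?_⟩
  simp only [eLpNorm_eq_lintegral_rpow_enorm_toReal hp hp_top, enorm_eq_self, ← ENNReal.rpow_mul]
  rw [setLIntegral_closedBall_enorm_rpow μ _ hR, ← hI, mul_comm,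
    ENNReal.mul_rpow_of_nonneg _ _ (by positivity), ← ENNReal.rpow_mul,
    ENNReal.coe_rpow_of_nonneg _ (by positivity)]
  congr 2
  field_simp

end PowerWeight

section WeightedConvolution

open Metric Module

variable {E : Type*} [NormedAddCommGroup E] {f h : E → ℝ≥0∞} {R : ℝ≥0} {t : ℝ}

-- If `y` is outside the ball then `‖x‖ ≤ 2 * ‖y‖`, otherwise `‖x‖ ≤ 2 * R`.
lemma enorm_rpow_le_add_indicator_closedBall (ht : 0 ≤ t) {x y : E} (hxy : ‖x - y‖ ≤ R) :
    ‖x‖ₑ ^ t ≤ 2 ^ t * ‖y‖ₑ ^ t + (2 * R) ^ t * (closedBall (0 : E) R).indicator 1 y := by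
  have htri : ‖x‖ₑ ≤ R + ‖y‖ₑ := calc
    ‖x‖ₑ = ‖x - y + y‖ₑ := by rw [sub_add_cancel]
    _ ≤ ‖x - y‖ₑ + ‖y‖ₑ := enorm_add_le _ _
    _ ≤ R + ‖y‖ₑ := by gcongr; exact enorm_le_coe.2 hxy
  by_cases hy : y ∈ closedBall (0 : E) R
  · have hyR : ‖y‖ₑ ≤ R := enorm_le_coe.2 (mem_closedBall_zero_iff.1 hy)
    rw [Set.indicator_of_mem hy, Pi.one_apply, mul_one]
    refine le_add_left (ENNReal.rpow_le_rpow (htri.trans ?_) ht)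
    rw [two_mul]
    gcongr
  · have hyR : (R : ℝ≥0∞) ≤ ‖y‖ₑ :=
      (coe_lt_enorm.2 (by simpa [← NNReal.coe_lt_coe] using hy)).le
    rw [← ENNReal.mul_rpow_of_nonneg _ _ ht]
    refine le_add_right (ENNReal.rpow_le_rpow (htri.trans ?_) ht)
    rw [two_mul]
    gcongr

variable [MeasurableSpace E] [BorelSpace E] {μ : Measure E}

lemma enorm_rpow_mul_lconvolution_le (ht : 0 ≤ t) (hf : Measurable f) (hh : Measurable h)
    (hfR : ∀ x, R < ‖x‖ → f x = 0) (x : E) :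
    ‖x‖ₑ ^ t * (f ⋆ₗ[μ] h) x ≤ 2 ^ t * (f ⋆ₗ[μ] fun y => ‖y‖ₑ ^ t * h y) x
      + (2 * R) ^ t * (f ⋆ₗ[μ] (closedBall (0 : E) R).indicator h) x := by
  simp only [lconvolution_def]
  have hB : Measurable ((closedBall (0 : E) R).indicator h) :=
    hh.indicator measurableSet_closedBall
  rw [← lintegral_const_mul _ (by fun_prop), ← lintegral_const_mul _ (by fun_prop),
    ← lintegral_const_mul _ (by fun_prop), ← lintegral_add_left (by fun_prop)]
  refine lintegral_mono fun y => ?_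
  by_cases hy : R < ‖y‖
  · simp [hfR y hy]
  have hind (z : E) :
      (closedBall (0 : E) R).indicator 1 z * h z = (closedBall (0 : E) R).indicator h z := by
    simp [← Set.indicator_mul_left]
  have hsub : ‖x - (-y + x)‖ ≤ R := by simpa using hy
  calc ‖x‖ₑ ^ t * (f y * h (-y + x))
      ≤ (2 ^ t * ‖-y + x‖ₑ ^ t + (2 * R) ^ t * (closedBall (0 : E) R).indicator 1 (-y + x))
          * (f y * h (-y + x)) := by
        gcongr
        exact enorm_rpow_le_add_indicator_closedBall ht hsub
    _ = _ := by
        rw [← hind]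
        ring

lemma lconvolution_enorm_rpow_mul_le (ht : 0 ≤ t) (hf : Measurable f) (hh : Measurable h)
    (hfR : ∀ x, R < ‖x‖ → f x = 0) (x : E) :
    (f ⋆ₗ[μ] fun y => ‖y‖ₑ ^ t * h y) x
      ≤ (2 ^ t * ‖x‖ₑ ^ t + (2 * R) ^ t * (closedBall (0 : E) R).indicator 1 x)
        * (f ⋆ₗ[μ] h) x := by
  simp only [lconvolution_def]
  rw [← lintegral_const_mul _ (by fun_prop)]
  refine lintegral_mono fun y => ?_
  by_cases hy : R < ‖y‖
  · simp [hfR y hy]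
  have hsub : ‖(-y + x) - x‖ ≤ R := by simpa using hy
  rw [mul_left_comm]
  gcongr
  exact enorm_rpow_le_add_indicator_closedBall ht hsub

lemma enorm_rpow_neg_mul_lconvolution_le (ht : 0 ≤ t) (hf : Measurable f) (hh : Measurable h)
    (hfR : ∀ x, R < ‖x‖ → f x = 0) {x : E} (hx : x ≠ 0) :
    ‖x‖ₑ ^ (-t) * (f ⋆ₗ[μ] fun y => ‖y‖ₑ ^ t * h y) x
      ≤ 2 ^ t * (f ⋆ₗ[μ] h) x + (2 * R) ^ t * (f ⋆ₗ[μ] h) x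
        * (closedBall (0 : E) R).indicator (fun y => ‖y‖ₑ ^ (-t)) x := by
  have hind : ‖x‖ₑ ^ (-t) * (closedBall (0 : E) R).indicator 1 x
      = (closedBall (0 : E) R).indicator (fun y => ‖y‖ₑ ^ (-t)) x := by
    simp [← Set.indicator_mul_right _ fun y : E => ‖y‖ₑ ^ (-t)]
  calc ‖x‖ₑ ^ (-t) * (f ⋆ₗ[μ] fun y => ‖y‖ₑ ^ t * h y) x
      ≤ ‖x‖ₑ ^ (-t) * ((2 ^ t * ‖x‖ₑ ^ t
          + (2 * R) ^ t * (closedBall (0 : E) R).indicator 1 x) * (f ⋆ₗ[μ] h) x) := by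
        gcongr
        exact lconvolution_enorm_rpow_mul_le ht hf hh hfR x
    _ = 2 ^ t * (‖x‖ₑ ^ (-t) * ‖x‖ₑ ^ t) * (f ⋆ₗ[μ] h) x + (2 * R) ^ t * (f ⋆ₗ[μ] h) x
          * (‖x‖ₑ ^ (-t) * (closedBall (0 : E) R).indicator 1 x) := by ring
    _ = _ := by rw [enorm_rpow_neg_mul_enorm_rpow hx, mul_one, hind]

lemma setLIntegral_le_eLpNorm_enorm_rpow_mul [NullSingletonClass μ] (hh : Measurable h) (s : ℝ)
    (A : Set E) : ∫⁻ x in A, h x ∂μ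
      ≤ eLpNorm (fun x => ‖x‖ₑ ^ (-s)) 2 (μ.restrict A) * eLpNorm (fun x => ‖x‖ₑ ^ s * h x) 2 μ :=
  calc ∫⁻ x in A, h x ∂μ
      = ∫⁻ x in A, ‖x‖ₑ ^ (-s) * (‖x‖ₑ ^ s * h x) ∂μ :=
        lintegral_congr_ae <| ae_restrict_of_ae <| (Measure.ae_ne μ 0).mono fun x hx => by
          dsimp only
          rw [← mul_assoc, enorm_rpow_neg_mul_enorm_rpow hx, one_mul]
    _ ≤ eLpNorm (fun x => ‖x‖ₑ ^ (-s)) 2 (μ.restrict A)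
          * eLpNorm (fun x => ‖x‖ₑ ^ s * h x) 2 (μ.restrict A) :=
        lintegral_mul_le_eLpNorm_two_mul_eLpNorm_two (by fun_prop) (by fun_prop)
    _ ≤ _ := by
        gcongr
        exact Measure.restrict_le_self

variable [NormedSpace ℝ E] [FiniteDimensional ℝ E] [μ.IsAddHaarMeasure]

lemma eLpNorm_enorm_rpow_mul_lconvolution_le_of_nonneg [Nontrivial E] (ht : 0 ≤ t)
    (hf : Measurable f) (hh : Measurable h) (hfR : ∀ x, R < ‖x‖ → f x = 0) :
    eLpNorm (fun x => ‖x‖ₑ ^ t * (f ⋆ₗ[μ] h) x) 2 μ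
      ≤ (2 ^ t * (∫⁻ x, f x ∂μ) + (2 * R) ^ t
          * (eLpNorm (fun x => ‖x‖ₑ ^ (-t)) 2 (μ.restrict (closedBall (0 : E) R)) * eLpNorm f 2 μ))
        * eLpNorm (fun x => ‖x‖ₑ ^ t * h x) 2 μ := by
  have hB : Measurable ((closedBall (0 : E) R).indicator h) :=
    hh.indicator measurableSet_closedBall
  have hnear : eLpNorm (f ⋆ₗ[μ] (closedBall (0 : E) R).indicator h) 2 μ
      ≤ (∫⁻ x in closedBall (0 : E) R, h x ∂μ) * eLpNorm f 2 μ := by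
    rw [lconvolution_comm, ← lintegral_indicator measurableSet_closedBall]
    exact eLpNorm_lconvolution_le one_le_two ENNReal.ofNat_ne_top hB hf
  calc eLpNorm (fun x => ‖x‖ₑ ^ t * (f ⋆ₗ[μ] h) x) 2 μ
      ≤ eLpNorm ((fun x => 2 ^ t * (f ⋆ₗ[μ] fun y => ‖y‖ₑ ^ t * h y) x) +
          fun x => (2 * R) ^ t * (f ⋆ₗ[μ] (closedBall (0 : E) R).indicator h) x) 2 μ :=
        eLpNorm_mono_ennreal_ae (.of_forall (enorm_rpow_mul_lconvolution_le ht hf hh hfR))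
    _ ≤ 2 ^ t * eLpNorm (f ⋆ₗ[μ] fun y => ‖y‖ₑ ^ t * h y) 2 μ
          + (2 * R) ^ t * eLpNorm (f ⋆ₗ[μ] (closedBall (0 : E) R).indicator h) 2 μ := by
        refine (eLpNorm_add_le (Measurable.aestronglyMeasurable (by fun_prop))
          (Measurable.aestronglyMeasurable (by fun_prop)) one_le_two).trans (add_le_add ?_ ?_)
        all_goals exact eLpNorm_const_mul_le_ennreal two_ne_zero _ (by fun_prop)
    _ ≤ 2 ^ t * ((∫⁻ x, f x ∂μ) * eLpNorm (fun x => ‖x‖ₑ ^ t * h x) 2 μ)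
          + (2 * R) ^ t * ((eLpNorm (fun x => ‖x‖ₑ ^ (-t)) 2 (μ.restrict (closedBall (0 : E) R))
            * eLpNorm (fun x => ‖x‖ₑ ^ t * h x) 2 μ) * eLpNorm f 2 μ) := by
        gcongr
        · exact eLpNorm_lconvolution_le one_le_two ENNReal.ofNat_ne_top hf (by fun_prop)
        · exact hnear.trans (by gcongr; exact setLIntegral_le_eLpNorm_enorm_rpow_mul hh t _)
    _ = _ := by ring

lemma eLpNorm_enorm_rpow_neg_mul_lconvolution_le [Nontrivial E] (ht : 0 ≤ t) (hf : Measurable f)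
    (hh : Measurable h) (hfR : ∀ x, R < ‖x‖ → f x = 0) :
    eLpNorm (fun x => ‖x‖ₑ ^ (-t) * (f ⋆ₗ[μ] h) x) 2 μ
      ≤ (2 ^ t * (∫⁻ x, f x ∂μ) + (2 * R) ^ t
          * (eLpNorm (fun x => ‖x‖ₑ ^ (-t)) 2 (μ.restrict (closedBall (0 : E) R)) * eLpNorm f 2 μ))
        * eLpNorm (fun x => ‖x‖ₑ ^ (-t) * h x) 2 μ := by
  set k : E → ℝ≥0∞ := fun x => ‖x‖ₑ ^ (-t) * h x with hk
  have hkm : Measurable k := by fun_prop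
  set w : E → ℝ≥0∞ := (closedBall (0 : E) R).indicator fun x => ‖x‖ₑ ^ (-t)
  have hwm : Measurable w := Measurable.indicator (by fun_prop) measurableSet_closedBall
  have hweight : h =ᵐ[μ] fun x => ‖x‖ₑ ^ t * k x := (Measure.ae_ne μ 0).mono fun x hx => by
    dsimp only [hk]
    rw [← mul_assoc, mul_comm (_ ^ t), enorm_rpow_neg_mul_enorm_rpow hx, one_mul]
  have hfh : f ⋆ₗ[μ] h ≤ f ⋆ₗ[μ] fun x => ‖x‖ₑ ^ t * k x := by
    rw [lconvolution_comm, lconvolution_comm (f := f)]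
    exact lconvolution_mono_left_ae hweight.le f
  have hpt : (fun x => ‖x‖ₑ ^ (-t) * (f ⋆ₗ[μ] h) x)
      ≤ᵐ[μ] (fun x => 2 ^ t * (f ⋆ₗ[μ] k) x)
        + fun x => (2 * R) ^ t * (eLpNorm f 2 μ * eLpNorm k 2 μ) * w x :=
    (Measure.ae_ne μ 0).mono fun x hx => by
      refine (mul_le_mul_right (hfh x) _).trans
        ((enorm_rpow_neg_mul_lconvolution_le ht hf hkm hfR hx).trans ?_)
      dsimp only [Pi.add_apply]
      gcongr
      exact lconvolution_le_eLpNorm_two_mul_eLpNorm_two hf hkm x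
  calc eLpNorm (fun x => ‖x‖ₑ ^ (-t) * (f ⋆ₗ[μ] h) x) 2 μ
      ≤ 2 ^ t * eLpNorm (f ⋆ₗ[μ] k) 2 μ
          + (2 * R) ^ t * (eLpNorm f 2 μ * eLpNorm k 2 μ) * eLpNorm w 2 μ := by
        refine (eLpNorm_mono_ennreal_ae hpt).trans <|
          (eLpNorm_add_le (Measurable.aestronglyMeasurable (by fun_prop))
          (Measurable.aestronglyMeasurable (by fun_prop)) one_le_two).trans (add_le_add ?_ ?_)
        all_goals exact eLpNorm_const_mul_le_ennreal two_ne_zero _ (by fun_prop)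
    _ ≤ 2 ^ t * ((∫⁻ x, f x ∂μ) * eLpNorm k 2 μ)
          + (2 * R) ^ t * (eLpNorm f 2 μ * eLpNorm k 2 μ) * eLpNorm w 2 μ := by
        gcongr
        exact eLpNorm_lconvolution_le one_le_two ENNReal.ofNat_ne_top hf hkm
    _ = _ := by
        rw [eLpNorm_indicator_eq_eLpNorm_restrict measurableSet_closedBall]
        ring

lemma eLpNorm_enorm_rpow_mul_lconvolution_le [Nontrivial E] (s : ℝ) (hf : Measurable f)
    (hh : Measurable h) (hfR : ∀ x, R < ‖x‖ → f x = 0) :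
    eLpNorm (fun x => ‖x‖ₑ ^ s * (f ⋆ₗ[μ] h) x) 2 μ
      ≤ (2 ^ |s| * (∫⁻ x, f x ∂μ) + (2 * R) ^ |s| *
          (eLpNorm (fun x => ‖x‖ₑ ^ (-|s|)) 2 (μ.restrict (closedBall (0 : E) R)) * eLpNorm f 2 μ))
        * eLpNorm (fun x => ‖x‖ₑ ^ s * h x) 2 μ := by
  rcases le_total 0 s with hs | hs
  · rw [abs_of_nonneg hs]
    exact eLpNorm_enorm_rpow_mul_lconvolution_le_of_nonneg hs hf hh hfR
  · have hmain :=
      eLpNorm_enorm_rpow_neg_mul_lconvolution_le (μ := μ) (neg_nonneg.2 hs) hf hh hfR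
    rw [abs_of_nonpos hs]
    rwa [neg_neg] at hmain ⊢

lemma exists_lintegral_le_rpow_mul_eLpNorm_two [Nontrivial E] (μ : Measure E) [μ.IsAddHaarMeasure] :
    ∃ C : ℝ≥0, ∀ (R : ℝ≥0) (f : E → ℝ≥0∞), R ≠ 0 → Measurable f → (∀ x, R < ‖x‖ → f x = 0) →
      ∫⁻ x, f x ∂μ ≤ C * (R : ℝ≥0∞) ^ (finrank ℝ E / 2 : ℝ) * eLpNorm f 2 μ := by
  obtain ⟨C, hC⟩ := exists_eLpNorm_enorm_rpow_closedBall_le μ two_ne_zero ENNReal.ofNat_ne_top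
    (s := -0) (by simp [finrank_pos])
  refine ⟨C, fun R f hR hf hfR => ?_⟩
  have hsupp : Function.support f ⊆ closedBall 0 R := fun x hx => by
    simpa using mt (hfR x) hx
  calc ∫⁻ x, f x ∂μ = ∫⁻ x in closedBall (0 : E) R, f x ∂μ := by
        rw [← lintegral_indicator measurableSet_closedBall, Set.indicator_eq_self.2 hsupp]
    _ ≤ eLpNorm (fun x => ‖x‖ₑ ^ (-0 : ℝ)) 2 (μ.restrict (closedBall 0 R))
          * eLpNorm (fun x => ‖x‖ₑ ^ (0 : ℝ) * f x) 2 μ :=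
        setLIntegral_le_eLpNorm_enorm_rpow_mul hf 0 _
    _ ≤ C * (R : ℝ≥0∞) ^ (finrank ℝ E / 2 : ℝ) * eLpNorm f 2 μ := by
        gcongr
        · simpa using hC R hR
        · simp

lemma exists_eLpNorm_enorm_rpow_mul_lconvolution_le (μ : Measure E) [μ.IsAddHaarMeasure] {s : ℝ}
    (hs : |s| < finrank ℝ E / 2) :
    ∃ C : ℝ≥0, ∀ (R : ℝ≥0) (f h : E → ℝ≥0∞), R ≠ 0 → Measurable f → Measurable h →
      (∀ x, R < ‖x‖ → f x = 0) →
      eLpNorm (fun x => ‖x‖ₑ ^ s * (f ⋆ₗ[μ] h) x) 2 μ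
        ≤ C * (R : ℝ≥0∞) ^ (finrank ℝ E / 2 : ℝ) * eLpNorm f 2 μ
          * eLpNorm (fun x => ‖x‖ₑ ^ s * h x) 2 μ := by
  have : Nontrivial E := Module.nontrivial_of_finrank_pos (R := ℝ) <| by
    have := (abs_nonneg s).trans_lt hs
    simpa using this
  have ht := abs_nonneg s
  obtain ⟨C₁, hC₁⟩ := exists_lintegral_le_rpow_mul_eLpNorm_two μ
  obtain ⟨C₂, hC₂⟩ := exists_eLpNorm_enorm_rpow_closedBall_le μ two_ne_zero ENNReal.ofNat_ne_top
    (s := -|s|) (by simpa using hs)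
  refine ⟨2 ^ |s| * (C₁ + C₂), fun R f h hR hf hh hfR => ?_⟩
  have hR0 : (R : ℝ≥0∞) ≠ 0 := by simpa using hR
  have hscale : (2 * R : ℝ≥0∞) ^ |s| * (R : ℝ≥0∞) ^ (-|s| + finrank ℝ E / 2)
      = 2 ^ |s| * (R : ℝ≥0∞) ^ (finrank ℝ E / 2 : ℝ) := by
    rw [ENNReal.mul_rpow_of_nonneg _ _ ht, mul_assoc, ← ENNReal.rpow_add _ _ hR0 ENNReal.coe_ne_top,
      add_neg_cancel_left]
  have hfactor : 2 ^ |s| * (∫⁻ x, f x ∂μ) + (2 * R) ^ |s|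
        * (eLpNorm (fun x => ‖x‖ₑ ^ (-|s|)) 2 (μ.restrict (closedBall (0 : E) R)) * eLpNorm f 2 μ)
      ≤ (2 ^ |s| * (C₁ + C₂) : ℝ≥0) * (R : ℝ≥0∞) ^ (finrank ℝ E / 2 : ℝ) * eLpNorm f 2 μ :=
    calc _ ≤ 2 ^ |s| * (C₁ * (R : ℝ≥0∞) ^ (finrank ℝ E / 2 : ℝ) * eLpNorm f 2 μ) + (2 * R) ^ |s|
          * (C₂ * (R : ℝ≥0∞) ^ (-|s| + finrank ℝ E / 2) * eLpNorm f 2 μ) := by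
          gcongr
          · exact hC₁ R f hR hf hfR
          · simpa using hC₂ R hR
      _ = 2 ^ |s| * (C₁ * (R : ℝ≥0∞) ^ (finrank ℝ E / 2 : ℝ) * eLpNorm f 2 μ)
          + C₂ * ((2 * R) ^ |s| * (R : ℝ≥0∞) ^ (-|s| + finrank ℝ E / 2)) * eLpNorm f 2 μ := by ring
      _ = _ := by
          rw [hscale, ENNReal.coe_mul, ENNReal.coe_add, ENNReal.coe_rpow_of_nonneg _ ht]
          push_cast
          ring
  exact (eLpNorm_enorm_rpow_mul_lconvolution_le s hf hh hfR).trans (by gcongr)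

end WeightedConvolution

section Fourier

variable {V : Type*} [NormedAddCommGroup V] [InnerProductSpace ℝ V] [FiniteDimensional ℝ V]
  [MeasurableSpace V] [BorelSpace V]

lemma continuous_fourier_schwartzMap (u : 𝓢(V, ℂ)) : Continuous (𝓕 ⇑u) := by
  rw [← fourier_coe]
  exact (𝓕 u).continuous

lemma fourier_mul_eq_convolution (u v : 𝓢(V, ℂ)) :
    𝓕 (fun x => u x * v x)
      = MeasureTheory.convolution (𝓕 ⇑u) (𝓕 ⇑v) (ContinuousLinearMap.mul ℂ ℂ) volume := by
  have hinv : 𝓕⁻ (pairing (ContinuousLinearMap.mul ℂ ℂ) u v)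
      = SchwartzMap.convolution (ContinuousLinearMap.mul ℂ ℂ) (𝓕⁻ u) (𝓕⁻ v) := by
    simp [SchwartzMap.convolution]
  ext ξ
  calc 𝓕 (fun x => u x * v x) ξ = (𝓕⁻ (pairing (ContinuousLinearMap.mul ℂ ℂ) u v)) (-ξ) := by
        rw [fourierInv_coe, Real.fourierInv_eq_fourier_neg, neg_neg]
        rfl
    _ = ∫ η, 𝓕 ⇑u (-η) * 𝓕 ⇑v (ξ - -η) := by
        rw [hinv, convolution_apply, MeasureTheory.convolution]
        simp [fourierInv_coe, Real.fourierInv_eq_fourier_neg, add_comm]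
    _ = _ := integral_neg_eq_self (fun η => 𝓕 ⇑u η * 𝓕 ⇑v (ξ - η)) volume

lemma enorm_fourier_mul_le_lconvolution (u v : 𝓢(V, ℂ)) (ξ : V) :
    ‖𝓕 (fun x => u x * v x) ξ‖ₑ ≤ ((fun η => ‖𝓕 ⇑u η‖ₑ) ⋆ₗ fun η => ‖𝓕 ⇑v η‖ₑ) ξ := by
  rw [fourier_mul_eq_convolution, MeasureTheory.convolution, lconvolution_def]
  refine (enorm_integral_le_lintegral_enorm _).trans_eq ?_
  simp only [ContinuousLinearMap.mul_apply', enorm_mul, neg_add_eq_sub]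

lemma eLpNorm_fourier_two (u : 𝓢(V, ℂ)) :
    eLpNorm (𝓕 ⇑u) 2 volume = eLpNorm ⇑u 2 volume := by
  have h : ‖(𝓕 u).toLp 2 volume‖ = ‖u.toLp 2 volume‖ := norm_fourier_toL2_eq u
  rw [norm_toLp, norm_toLp, fourier_coe] at h
  exact (ENNReal.toReal_eq_toReal_iff' ((𝓕 u).memLp 2 volume).2.ne (u.memLp 2 volume).2.ne).1 h

end Fourier

section LittlewoodPaley

lemma sobNorm_eq_eLpNorm_enorm_rpow_mul [NeZero d] (s : ℝ) (u : Ed d → ℂ) :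
    sobNorm s u = eLpNorm (fun ξ => ‖ξ‖ₑ ^ s * ‖𝓕 u ξ‖ₑ) 2 volume :=
  eLpNorm_congr_enorm_ae <| (Measure.ae_ne volume 0).mono fun ξ hξ => by
    rw [enorm_mul, enorm_norm_rpow hξ, enorm_norm, enorm_eq_self]

namespace LPPair

variable (P : LPPair d) (q : ℤ) (u : 𝓢(Ed d, ℂ)) {ξ : Ed d}

lemma besovNorm_one (s : ℝ) (p : ℝ≥0∞) (u : Ed d → ℂ) :
    besovNorm P s p 1 u
      = ∑' q : ℤ, (2 : ℝ≥0∞) ^ ((q : ℝ) * s) * eLpNorm (lpBlock P q u) p volume := by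
  simp [besovNorm, ellNorm]

lemma φ_dilation_eq_zero (hξ : (2 : ℝ) ^ q * (8 / 3) < ‖ξ‖) : P.φ ((2 : ℝ) ^ (-q) • ξ) = 0 := by
  by_contra hne
  have hle := (P.supp_φ hne).2
  rw [norm_smul, Real.norm_of_nonneg (by positivity), zpow_neg,
    inv_mul_le_iff₀ (by positivity)] at hle
  exact hξ.not_ge hle

lemma one_le_tsum_enorm_φ_dilation (hξ : ξ ≠ 0) :
    1 ≤ ∑' q : ℤ, ‖(P.φ ((2 : ℝ) ^ (-q) • ξ) : ℂ)‖ₑ :=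
  calc (1 : ℝ≥0∞) = ‖∑' q : ℤ, P.φ ((2 : ℝ) ^ (-q) • ξ)‖ₑ := by rw [P.sum_one' ξ hξ, enorm_one]
    _ ≤ ∑' q : ℤ, ‖P.φ ((2 : ℝ) ^ (-q) • ξ)‖ₑ := enorm_tsum_le_tsum_enorm
    _ = ∑' q : ℤ, ‖(P.φ ((2 : ℝ) ^ (-q) • ξ) : ℂ)‖ₑ := by
      simp only [← enorm_norm (_ : ℂ), Complex.norm_real, enorm_norm]

lemma exists_schwartzMap_eq_φ_dilation_mul_fourier :
    ∃ w : 𝓢(Ed d, ℂ), ⇑w = fun ξ => (P.φ ((2 : ℝ) ^ (-q) • ξ) : ℂ) * 𝓕 ⇑u ξ := by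
  have hsupp : HasCompactSupport fun ξ => (P.φ ((2 : ℝ) ^ (-q) • ξ) : ℂ) * 𝓕 ⇑u ξ := by
    refine HasCompactSupport.intro (isCompact_closedBall 0 ((2 : ℝ) ^ q * (8 / 3))) fun ξ hξ => ?_
    rw [P.φ_dilation_eq_zero q (by simpa using hξ), Complex.ofReal_zero, zero_mul]
  have hsmooth : ContDiff ℝ (⊤ : ℕ∞) fun ξ => (P.φ ((2 : ℝ) ^ (-q) • ξ) : ℂ) * 𝓕 ⇑u ξ :=
    (Complex.ofRealCLM.contDiff.comp (P.smooth_φ.comp (contDiff_const_smul _))).mul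
      ((𝓕 u).smooth _)
  exact ⟨hsupp.toSchwartzMap hsmooth, rfl⟩

lemma exists_schwartzMap_eq_lpBlock :
    ∃ w : 𝓢(Ed d, ℂ), ⇑w = lpBlock P q u ∧
      𝓕 ⇑w = fun ξ => (P.φ ((2 : ℝ) ^ (-q) • ξ) : ℂ) * 𝓕 ⇑u ξ := by
  obtain ⟨w, hw⟩ := P.exists_schwartzMap_eq_φ_dilation_mul_fourier q u
  refine ⟨𝓕⁻ w, ?_, ?_⟩
  · rw [fourierInv_coe, hw]
    rfl
  · rw [← fourier_coe, FourierTransform.fourier_fourierInv_eq, hw]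

lemma fourier_lpBlock :
    𝓕 (lpBlock P q u) = fun ξ => (P.φ ((2 : ℝ) ^ (-q) • ξ) : ℂ) * 𝓕 ⇑u ξ := by
  obtain ⟨w, hw, hfw⟩ := P.exists_schwartzMap_eq_lpBlock q u
  rw [← hw, hfw]

lemma continuous_fourier_lpBlock : Continuous (𝓕 (lpBlock P q u)) := by
  obtain ⟨w, hw, -⟩ := P.exists_schwartzMap_eq_lpBlock q u
  exact hw ▸ continuous_fourier_schwartzMap w

lemma eLpNorm_fourier_lpBlock :
    eLpNorm (𝓕 (lpBlock P q u)) 2 volume = eLpNorm (lpBlock P q u) 2 volume := by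
  obtain ⟨w, hw, -⟩ := P.exists_schwartzMap_eq_lpBlock q u
  rw [← hw, eLpNorm_fourier_two]

lemma enorm_fourier_le_tsum_fourier_lpBlock (hξ : ξ ≠ 0) :
    ‖𝓕 ⇑u ξ‖ₑ ≤ ∑' q : ℤ, ‖𝓕 (lpBlock P q u) ξ‖ₑ := by
  simp only [fourier_lpBlock, enorm_mul, ENNReal.tsum_mul_right]
  exact le_mul_of_one_le_left' (P.one_le_tsum_enorm_φ_dilation hξ)

lemma enorm_rpow_mul_fourier_mul_le_tsum [NeZero d] (s : ℝ) (v : 𝓢(Ed d, ℂ)) (ξ : Ed d) :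
    ‖ξ‖ₑ ^ s * ‖𝓕 (fun x => u x * v x) ξ‖ₑ
      ≤ ∑' q : ℤ, ‖ξ‖ₑ ^ s * ((fun η => ‖𝓕 (lpBlock P q u) η‖ₑ) ⋆ₗ fun η => ‖𝓕 ⇑v η‖ₑ) ξ := by
  have hdecomp : (fun η => ‖𝓕 ⇑u η‖ₑ) ≤ᵐ[volume] fun η => ∑' q : ℤ, ‖𝓕 (lpBlock P q u) η‖ₑ :=
    (Measure.ae_ne volume 0).mono fun η hη => P.enorm_fourier_le_tsum_fourier_lpBlock u hη
  have hv := continuous_fourier_schwartzMap v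
  have hu := fun q => P.continuous_fourier_lpBlock q u
  rw [ENNReal.tsum_mul_left, ← tsum_lconvolution (fun q => by fun_prop) (by fun_prop)]
  gcongr
  exact (enorm_fourier_mul_le_lconvolution u v ξ).trans (lconvolution_mono_left_ae hdecomp _ ξ)

lemma exists_eLpNorm_enorm_rpow_mul_lconvolution_lpBlock_le [NeZero d] {s : ℝ}
    (hs : |s| < (d : ℝ) / 2) :
    ∃ C : ℝ≥0, ∀ (P : LPPair d) (q : ℤ) (u v : 𝓢(Ed d, ℂ)),
      eLpNorm (fun ξ => ‖ξ‖ₑ ^ s *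
          ((fun η => ‖𝓕 (lpBlock P q u) η‖ₑ) ⋆ₗ fun η => ‖𝓕 ⇑v η‖ₑ) ξ) 2 volume
        ≤ C * ((2 : ℝ≥0∞) ^ ((q : ℝ) * ((d : ℝ) / 2)) * eLpNorm (lpBlock P q u) 2 volume)
          * sobNorm s v := by
  obtain ⟨C, hC⟩ := exists_eLpNorm_enorm_rpow_mul_lconvolution_le (volume : Measure (Ed d))
    (s := s) (by simpa using hs)
  refine ⟨C * (8 / 3) ^ ((d : ℝ) / 2), fun P q u v => ?_⟩
  have hu := P.continuous_fourier_lpBlock q u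
  have hv := continuous_fourier_schwartzMap v
  have hsupp : ∀ ξ : Ed d, ((2 ^ q * (8 / 3) : ℝ≥0) : ℝ) < ‖ξ‖ → ‖𝓕 (lpBlock P q u) ξ‖ₑ = 0 :=
    fun ξ hξ => by simp only [fourier_lpBlock, P.φ_dilation_eq_zero q (by simpa using hξ),
      Complex.ofReal_zero, zero_mul, enorm_zero]
  have hpow : ((2 ^ q * (8 / 3) : ℝ≥0) : ℝ≥0∞) ^ ((d : ℝ) / 2)
      = 2 ^ ((q : ℝ) * ((d : ℝ) / 2)) * ((8 / 3 : ℝ≥0) ^ ((d : ℝ) / 2) : ℝ≥0) := by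
    rw [ENNReal.coe_mul, ENNReal.mul_rpow_of_nonneg _ _ (by positivity),
      ENNReal.coe_zpow two_ne_zero, ← ENNReal.rpow_intCast, ← ENNReal.rpow_mul, ENNReal.coe_ofNat,
      ENNReal.coe_rpow_of_nonneg _ (by positivity)]
  have hblock := hC (2 ^ q * (8 / 3)) (fun ξ => ‖𝓕 (lpBlock P q u) ξ‖ₑ) (fun ξ => ‖𝓕 ⇑v ξ‖ₑ)
    (by positivity) (by fun_prop) (by fun_prop) hsupp
  rw [finrank_euclideanSpace_fin, hpow, eLpNorm_enorm, eLpNorm_fourier_lpBlock,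
    ← sobNorm_eq_eLpNorm_enorm_rpow_mul] at hblock
  refine hblock.trans_eq ?_
  rw [ENNReal.coe_mul]
  ring

end LPPair

end LittlewoodPaley

theorem stmt8_general {d : ℕ} (s : ℝ) (hs1 : -((d : ℝ) / 2) < s) (hs2 : s < (d : ℝ) / 2) :
    ∃ C : ℝ≥0, 0 < C ∧ ∀ (P : LPPair d) (u v : 𝓢(Ed d, ℂ)),
      sobNorm s (fun x => u x * v x)
        ≤ C * besovNorm P ((d : ℝ) / 2) 2 1 ⇑u * sobNorm s ⇑v := by
  have : NeZero d := ⟨fun hd => by simp only [hd, Nat.cast_zero] at hs1 hs2; linarith⟩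
  obtain ⟨C, hC⟩ := LPPair.exists_eLpNorm_enorm_rpow_mul_lconvolution_lpBlock_le
    (abs_lt.2 ⟨hs1, hs2⟩)
  refine ⟨C + 1, by positivity, fun P u v => ?_⟩
  have hu := fun q => P.continuous_fourier_lpBlock q u
  have hv := continuous_fourier_schwartzMap v
  calc sobNorm s (fun x => u x * v x)
      ≤ eLpNorm (fun ξ => ∑' q : ℤ, ‖ξ‖ₑ ^ s *
          ((fun η => ‖𝓕 (lpBlock P q u) η‖ₑ) ⋆ₗ fun η => ‖𝓕 ⇑v η‖ₑ) ξ) 2 volume := by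
        rw [sobNorm_eq_eLpNorm_enorm_rpow_mul]
        exact eLpNorm_mono_ennreal_ae (.of_forall (P.enorm_rpow_mul_fourier_mul_le_tsum u s v))
    _ ≤ ∑' q : ℤ, eLpNorm (fun ξ => ‖ξ‖ₑ ^ s *
          ((fun η => ‖𝓕 (lpBlock P q u) η‖ₑ) ⋆ₗ fun η => ‖𝓕 ⇑v η‖ₑ) ξ) 2 volume :=
        eLpNorm_tsum_le_ennreal one_le_two ENNReal.ofNat_ne_top fun q => by fun_prop
    _ ≤ ∑' q : ℤ, C * ((2 : ℝ≥0∞) ^ ((q : ℝ) * ((d : ℝ) / 2))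
          * eLpNorm (lpBlock P q u) 2 volume) * sobNorm s v :=
        ENNReal.tsum_le_tsum fun q => hC P q u v
    _ = C * besovNorm P ((d : ℝ) / 2) 2 1 ⇑u * sobNorm s ⇑v := by
        rw [ENNReal.tsum_mul_right, ENNReal.tsum_mul_left, P.besovNorm_one]
    _ ≤ (C + 1 : ℝ≥0) * besovNorm P ((d : ℝ) / 2) 2 1 ⇑u * sobNorm s ⇑v := by
        gcongr
        exact le_self_add

/-- for `s ∈ (−d/2, d/2)`, `‖uv‖_{Ḣ^s} ≤ C‖u‖_{Ḃ^{d/2}_{2,1}}‖v‖_{Ḣ^s}`. -/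
theorem stmt8 {d : ℕ} (hd : 1 ≤ d) (P : LPPair d) (s : ℝ)
    (hs1 : -((d : ℝ)/2) < s) (hs2 : s < (d : ℝ)/2) :
    ∃ C : ℝ≥0, 0 < C ∧ ∀ u v : 𝓢(Ed d, ℂ),
      sobNorm s (fun x => u x * v x)
        ≤ C * besovNorm P ((d : ℝ)/2) 2 1 ⇑u * sobNorm s ⇑v := by
  obtain ⟨C, hC, hbound⟩ := stmt8_general s hs1 hs2
  exact ⟨C, hC, hbound P⟩
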